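/- (Hardness from harmonic to egalitarian welfare.) For every ε > 0 there exists n₀ ∈ ℕ such that for every n ≥ n₀, every real p ≤ −1, and every deterministic online algorithm A for n agents, there exists an instance v with unit monopolist utilities such that OPT_p(v) ≥ n^{1/2 − ε} · ALG_{A,p}(v). -/

import Mathlib

/-!
Put `S = ⌊√n⌋` and `α = -1 / p ∈ (0, 1]`. The adversary arranges `S ^ 2` agents in `S` groups of
`S`; every remaining agent is an outsider who values only a private item, worth `1`.

The first `S` items are group items: item `j` is worth `x = S ^ (-α) / 2` to each agent of group
`j`. Then come `S` rounds with one item each, valued only by the agents that have survived so far.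
After every round, the survivor to whom the algorithm has given most is eliminated from each group.
The item of round `l` is worth `(1 - x) * (((S - l) / S) ^ α - ((S - l - 1) / S) ^ α) ≤ S ^ (-α)`
(subadditivity of `z ↦ z ^ α`), so an agent eliminated after round `t` has
`(1 - x) * ((S - t - 1) / S) ^ α` of its unit total left, which becomes the value of a private item
at the end. The `S` agents that survive until the last round, one per group, have nothing left.

*The algorithm.* Eliminating best-off agents does not increase the survivors' average utility, and
the item of round `l` is shared by `S * (S - l)` survivors. With `H = ∑ l < S, 1 / (S - l)`, the
last survivors together therefore get at most `(1 / 2 + H) * S ^ (-α) ≤ 3 / 2 * H * S ^ (-α)`. By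
convexity of `z ↦ z ^ p`, the welfare is at most `(n / S) ^ α` times their average utility, hence
at most `6 * H / S`.

*The optimum.* In hindsight each last survivor takes its group item and everyone else takes a
private item. An agent eliminated after round `t` then has utility at least `((S - t) / S) ^ α / 4`
and contributes at most `4 ^ (-p) * S / (S - t)` to the sum of `p`-th powers. The mean of the `p`-th
powers is thus at most `4 ^ (-p) * H ≤ (1 / (4 * H)) ^ p`, and the optimum is at least
`1 / (4 * H)`.

The ratio is at least `S / (24 * H ^ 2)`, which exceeds `n ^ (1 / 2 - ε)` for large `n` because
`H ≤ 1 + log n`.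
-/

open Real

/-- The `p`-mean welfare of a utility profile, taken to be `0` when `p < 0`
and some utility is zero. -/
noncomputable def pMeanWelfare (n : ℕ) (p : ℝ) (u : Fin n → ℝ) : ℝ :=
  if p < 0 ∧ ∃ a, u a = 0 then 0
  else ((1 / (n : ℝ)) * ∑ a, u a ^ p) ^ (1 / p)

/-- The optimal `p`-mean welfare over all feasible (fractional) allocations. -/
noncomputable def OPTwelfare (n m : ℕ) (p : ℝ) (v : Fin m → Fin n → ℝ) : ℝ :=
  sSup { w : ℝ | ∃ y : Fin m → Fin n → ℝ,
    (∀ k a, 0 ≤ y k a) ∧ (∀ k, ∑ a, y k a ≤ 1) ∧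
    w = pMeanWelfare n p (fun a => ∑ k, v k a * y k a) }

/-- The utilities produced by a deterministic online algorithm `A` on instance `v`:
item `k` is allocated according to `A k` applied to the value history of items `0,…,k`. -/
noncomputable def onlineUtilities (n m : ℕ)
    (A : (k : ℕ) → (Fin (k + 1) → Fin n → ℝ) → (Fin n → ℝ))
    (v : Fin m → Fin n → ℝ) : Fin n → ℝ :=
  fun a => ∑ k : Fin m, v k a *
    A k.1 (fun i : Fin (k.1 + 1) => v (Fin.castLE k.isLt i)) a

/-- The `p`-mean welfare achieved by the online algorithm `A` on instance `v`. -/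
noncomputable def ALGwelfare (n m : ℕ) (p : ℝ)
    (A : (k : ℕ) → (Fin (k + 1) → Fin n → ℝ) → (Fin n → ℝ))
    (v : Fin m → Fin n → ℝ) : ℝ :=
  pMeanWelfare n p (onlineUtilities n m A v)

open Finset

/-! ### Streams of items -/

section Stream

variable {ι : Type*}

/-- A deterministic online rule for the agents `ι`: `A k` allocates item `k` on the basis of the
values of the items `0, …, k`. -/
abbrev OnlineAlgorithm (ι : Type*) := (k : ℕ) → (Fin (k + 1) → ι → ℝ) → ι → ℝ

/-- An online rule is feasible if it always hands out nonnegative shares of at most one unit of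
each item. -/
def IsFeasible [Fintype ι] (A : OnlineAlgorithm ι) : Prop :=
  ∀ k h, (∀ a, 0 ≤ A k h a) ∧ ∑ a, A k h a ≤ 1

/-- The utility of agent `a` from the items `0, …, K - 1` of the stream `w`, allocated online
by `A`. The stream is infinite so that the adversary can fix it one item at a time. -/
noncomputable def streamUtility (A : OnlineAlgorithm ι) (w : ℕ → ι → ℝ) (K : ℕ) (a : ι) : ℝ :=
  ∑ k ∈ range K, w k a * A k (fun i => w i) a

lemma streamUtility_congr (A : OnlineAlgorithm ι) {w w' : ℕ → ι → ℝ} {K : ℕ}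
    (h : ∀ k < K, w k = w' k) : streamUtility A w K = streamUtility A w' K := by
  funext a
  refine sum_congr rfl fun k hk => ?_
  have hk := mem_range.1 hk
  have history_eq : (fun i : Fin (k + 1) => w i) = fun i : Fin (k + 1) => w' i :=
    funext fun i => h i (by omega)
  rw [h k hk, history_eq]

variable [Fintype ι] {A : OnlineAlgorithm ι} {w : ℕ → ι → ℝ} {s : Finset ι} {D : ℝ}

lemma sum_streamUtility_succ_le (hA : IsFeasible A) {K : ℕ} (hD : 0 ≤ D)
    (hw : ∀ a ∈ s, w K a ≤ D) :
    ∑ a ∈ s, streamUtility A w (K + 1) a ≤ ∑ a ∈ s, streamUtility A w K a + D := by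
  simp only [streamUtility, sum_range_succ, sum_add_distrib]
  obtain ⟨share_nonneg, sum_share⟩ := hA K fun i => w i
  gcongr
  calc ∑ a ∈ s, w K a * A K (fun i => w i) a
      ≤ ∑ a ∈ s, D * A K (fun i => w i) a :=
        sum_le_sum fun a ha => mul_le_mul_of_nonneg_right (hw a ha) (share_nonneg a)
    _ ≤ D * ∑ a, A K (fun i => w i) a := by
        rw [← mul_sum]
        exact mul_le_mul_of_nonneg_left (sum_le_univ_sum_of_nonneg share_nonneg) hD
    _ ≤ D := mul_le_of_le_one_right hD sum_share

lemma sum_streamUtility_le (hA : IsFeasible A) (hD : 0 ≤ D) :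
    ∀ {K : ℕ}, (∀ k < K, ∀ a ∈ s, w k a ≤ D) → ∑ a ∈ s, streamUtility A w K a ≤ K * D
  | 0, _ => by simp [streamUtility]
  | K + 1, hw => by
    have ih := sum_streamUtility_le hA hD fun k hk => hw k (hk.trans K.lt_succ_self)
    have hlast := sum_streamUtility_succ_le hA hD (hw K K.lt_succ_self)
    push_cast
    linarith

end Stream

/-! ### Greedy elimination -/

section Elimination

variable {ι κ : Type*} [DecidableEq ι] [DecidableEq κ]

/-- `R'` arises from `R` by removing, from each nonempty group (fiber of `g`), one member whose
score `f` is maximal in its group. -/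
structure EliminatesBest (g : ι → κ) (f : ι → ℝ) (R R' : Finset ι) : Prop where
  subset : R' ⊆ R
  exists_erase : ∀ j, {a ∈ R | g a = j}.Nonempty → ∃ m ∈ {a ∈ R | g a = j},
    (∀ a ∈ {a ∈ R | g a = j}, f a ≤ f m) ∧ {a ∈ R' | g a = j} = {a ∈ R | g a = j}.erase m

lemma exists_eliminatesBest (g : ι → κ) (f : ι → ℝ) (R : Finset ι) :
    ∃ R', EliminatesBest g f R R' := by
  rcases isEmpty_or_nonempty ι with _ | _
  · exact ⟨R, subset_rfl, fun j ⟨a, _⟩ => isEmptyElim a⟩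
  have exists_max (j : κ) : {a ∈ R | g a = j}.Nonempty →
      ∃ m ∈ {a ∈ R | g a = j}, ∀ a ∈ {a ∈ R | g a = j}, f a ≤ f m :=
    exists_max_image _ f
  choose! m hm hmax using exists_max
  refine ⟨{a ∈ R | a ≠ m (g a)}, filter_subset _ _, fun j hj => ⟨m j, hm j hj, hmax j hj, ?_⟩⟩
  ext a
  simp only [mem_filter, mem_erase]
  constructor
  · rintro ⟨⟨haR, ham⟩, rfl⟩
    exact ⟨ham, haR, rfl⟩
  · rintro ⟨ham, haR, rfl⟩
    exact ⟨⟨haR, ham⟩, rfl⟩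

lemma card_mul_sum_erase_le {s : Finset ι} {f : ι → ℝ} {m : ι} (hm : m ∈ s)
    (hmax : ∀ a ∈ s, f a ≤ f m) :
    (#s : ℝ) * ∑ a ∈ s.erase m, f a ≤ (#s - 1) * ∑ a ∈ s, f a := by
  have sum_le : ∑ a ∈ s, f a ≤ #s * f m := by simpa using sum_le_card_nsmul s f (f m) hmax
  have sum_erase := add_sum_erase s f hm
  nlinarith

namespace EliminatesBest

variable {g : ι → κ} {f : ι → ℝ} {R R' : Finset ι}

lemma card_group (h : EliminatesBest g f R R') (j : κ) :
    #{a ∈ R' | g a = j} = #{a ∈ R | g a = j} - 1 := by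
  rcases {a ∈ R | g a = j}.eq_empty_or_nonempty with hj | hj
  · have hj' : {a ∈ R' | g a = j} = ∅ := subset_empty.1 (hj ▸ filter_subset_filter _ h.subset)
    rw [hj, hj', card_empty]
  · obtain ⟨m, hm, -, erase_eq⟩ := h.exists_erase j hj
    rw [erase_eq, card_erase_of_mem hm]

lemma card_mul_sum_le (h : EliminatesBest g f R R') {c : ℕ}
    (hc : ∀ j ∈ R.image g, #{a ∈ R | g a = j} = c) :
    (c : ℝ) * ∑ a ∈ R', f a ≤ (c - 1) * ∑ a ∈ R, f a := by
  rw [← sum_fiberwise_of_maps_to (s := R) fun a ha => mem_image_of_mem g ha,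
    ← sum_fiberwise_of_maps_to (s := R') fun a ha => mem_image_of_mem g (h.subset ha),
    mul_sum, mul_sum]
  refine sum_le_sum fun j hj => ?_
  obtain ⟨m, hm, hmax, erase_eq⟩ := h.exists_erase j (fiber_nonempty_iff_mem_image.2 hj)
  simpa only [erase_eq, hc j hj] using card_mul_sum_erase_le hm hmax

end EliminatesBest

/-- A sequence of survivor sets in which `R (l + 1)` arises from `R l` by eliminating from each
group a member with the best score `f l` of round `l`. -/
def IsGreedyElimination (g : ι → κ) (f : ℕ → ι → ℝ) (R : ℕ → Finset ι) : Prop :=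
  ∀ l, EliminatesBest g (f l) (R l) (R (l + 1))

namespace IsGreedyElimination

variable {g : ι → κ} {f : ℕ → ι → ℝ} {R : ℕ → Finset ι} {S : ℕ}

lemma antitone (h : IsGreedyElimination g f R) : Antitone R :=
  antitone_nat_of_succ_le fun l => (h l).subset

lemma card_group (h : IsGreedyElimination g f R) (hS : ∀ j, #{a ∈ R 0 | g a = j} = S) (l : ℕ)
    (j : κ) : #{a ∈ R l | g a = j} = S - l := by
  induction l with
  | zero => exact hS j
  | succ l ih => rw [(h l).card_group, ih, Nat.sub_sub]

lemma card_eq [Fintype κ] (h : IsGreedyElimination g f R)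
    (hS : ∀ j, #{a ∈ R 0 | g a = j} = S) (l : ℕ) :
    #(R l) = Fintype.card κ * (S - l) := by
  rw [card_eq_sum_card_fiberwise (f := g) (t := univ) fun _ _ => mem_coe.2 (mem_univ _),
    sum_congr rfl fun j _ => h.card_group hS l j, sum_const, card_univ, smul_eq_mul]

lemma card_sdiff_succ [Fintype κ] (h : IsGreedyElimination g f R)
    (hS : ∀ j, #{a ∈ R 0 | g a = j} = S) {l : ℕ} (hl : l < S) :
    #(R l \ R (l + 1)) = Fintype.card κ := by
  rw [card_sdiff_of_subset (h l).subset, h.card_eq hS, h.card_eq hS, ← Nat.mul_sub,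
    show S - l - (S - (l + 1)) = 1 by omega, mul_one]

lemma eq_empty (h : IsGreedyElimination g f R) (hS : ∀ j, #{a ∈ R 0 | g a = j} = S) :
    R S = ∅ := by
  refine eq_empty_of_forall_notMem fun a ha => ?_
  have hgroup := h.card_group hS S (g a)
  rw [Nat.sub_self, card_eq_zero] at hgroup
  exact notMem_empty a (hgroup ▸ mem_filter.2 ⟨ha, rfl⟩)

/-- Eliminating best members does not increase an average, so the total score per remaining member
of a group grows by at most `d i / (S - i)` in round `i`. -/
lemma sum_le (h : IsGreedyElimination g f R) (hS : ∀ j, #{a ∈ R 0 | g a = j} = S) {T : ℝ}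
    {d : ℕ → ℝ} (hzero : ∑ a ∈ R 0, f 0 a ≤ T + d 0)
    (hsucc : ∀ l, ∑ a ∈ R (l + 1), f (l + 1) a ≤ ∑ a ∈ R (l + 1), f l a + d (l + 1))
    {l : ℕ} (hl : l < S) :
    ∑ a ∈ R l, f l a ≤
      ((S - l : ℕ) : ℝ) * (T / S + ∑ i ∈ range (l + 1), d i / ((S - i : ℕ) : ℝ)) := by
  induction l with
  | zero =>
    have hS0 : (S : ℝ) ≠ 0 := by exact_mod_cast hl.ne'
    refine hzero.trans_eq ?_
    simp only [zero_add, sum_range_one, Nat.sub_zero]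
    field_simp
  | succ l ih =>
    have ih := ih (by omega)
    set B := T / S + ∑ i ∈ range (l + 1), d i / ((S - i : ℕ) : ℝ)
    obtain ⟨c, hc⟩ : ∃ c, S - l = c + 2 := ⟨S - l - 2, by omega⟩
    have hc' : S - (l + 1) = c + 1 := by omega
    have erase_le := (h l).card_mul_sum_le fun j _ => (h.card_group hS l j).trans hc
    have survivors_le : ∑ a ∈ R (l + 1), f l a ≤ (c + 1) * B := by
      rw [hc] at ih
      push_cast at ih erase_le
      have hcpos : (0 : ℝ) < c + 2 := by positivity
      refine le_of_mul_le_mul_left (erase_le.trans ?_) hcpos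
      nlinarith
    calc ∑ a ∈ R (l + 1), f (l + 1) a ≤ (c + 1) * B + d (l + 1) :=
          (hsucc l).trans (by gcongr)
      _ = ((S - (l + 1) : ℕ) : ℝ) *
            (T / S + ∑ i ∈ range (l + 1 + 1), d i / ((S - i : ℕ) : ℝ)) := by
          rw [sum_range_succ _ (l + 1), ← add_assoc, hc', mul_add]
          push_cast
          field_simp

end IsGreedyElimination

end Elimination

lemma exists_groups {ι κ : Type*} [Fintype ι] [Fintype κ] [DecidableEq κ]
    [Nonempty κ] {S : ℕ} (h : Fintype.card κ * S ≤ Fintype.card ι) :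
    ∃ (g : ι → κ) (R₀ : Finset ι), ∀ j, #{a ∈ R₀ | g a = j} = S := by
  obtain ⟨e⟩ : Nonempty (κ × Fin S ↪ ι) :=
    Function.Embedding.nonempty_of_card_le (by simpa using h)
  obtain ⟨j₀⟩ := ‹Nonempty κ›
  refine ⟨Function.extend e Prod.fst fun _ => j₀, univ.map e, fun j => ?_⟩
  have fiber_eq : ({q | q.1 = j} : Finset (κ × Fin S)) = {j} ×ˢ univ := by
    ext ⟨i, b⟩
    simp [eq_comm]
  simp only [filter_map, card_map, Function.comp_def, e.injective.extend_apply, fiber_eq]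
  simp

lemma sum_eq_sum_range_sum_sdiff {ι M : Type*} [DecidableEq ι] [AddCommGroup M]
    {R : ℕ → Finset ι} (hR : Antitone R) {S : ℕ} (hS : R S = ∅) (f : ι → M) :
    ∑ a ∈ R 0, f a = ∑ t ∈ range S, ∑ a ∈ R t \ R (t + 1), f a := by
  rw [sum_congr rfl fun t _ => sum_sdiff_eq_sub (hR t.le_succ), sum_range_sub', hS, sum_empty,
    sub_zero]

lemma exists_mem_sdiff_succ {ι : Type*} [DecidableEq ι] {R : ℕ → Finset ι} {S : ℕ}
    (hS : R S = ∅) {a : ι} (ha : a ∈ R 0) : ∃ t < S, a ∈ R t \ R (t + 1) := by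
  by_contra! h
  have mem_of_le (t : ℕ) (ht : t ≤ S) : a ∈ R t := by
    induction t with
    | zero => exact ha
    | succ t ih =>
      by_contra hat
      exact h t ht (mem_sdiff.2 ⟨ih (by omega), hat⟩)
  simpa [hS] using mem_of_le S le_rfl

/-! ### The elimination stream -/

/-- A step may depend on the whole past, provided that it depends on nothing else. -/
lemma exists_seq_of_causal {α : Type*} {P : ℕ → (ℕ → α) → α → Prop}
    (hex : ∀ l R, ∃ b, P l R b)
    (hcongr : ∀ l R R' b, (∀ i ≤ l, R i = R' i) → P l R b → P l R' b) (a₀ : α) :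
    ∃ R : ℕ → α, R 0 = a₀ ∧ ∀ l, P l R (R (l + 1)) := by
  choose next hnext using hex
  let F : ℕ → ℕ → α :=
    fun l => l.rec (fun _ => a₀) fun l R i => if i ≤ l then R i else next l R
  have F_stable {i l : ℕ} (h : i ≤ l) : F l i = F i i := by
    induction l, h using Nat.le_induction with
    | base => rfl
    | succ l hl ih => exact (if_pos hl).trans ih
  have F_succ (l : ℕ) : F (l + 1) (l + 1) = next l (F l) := if_neg l.not_succ_le_self
  refine ⟨fun l => F l l, rfl, fun l => ?_⟩
  simp only [F_succ]
  exact hcongr l (F l) _ _ (fun i hi => F_stable hi) (hnext l (F l))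

section EliminationStream

variable {ι : Type*} [DecidableEq ι] {G : ℕ}

/-- The values of the adversary's items. Item `k < G` is worth `x` to the players (the members of
`R 0`) of group `k`, and item `G + l` is worth `d l` to the survivors `R l` of `l` rounds. -/
noncomputable def eliminationItem (x : ℝ) (d : ℕ → ℝ) (g : ι → Fin G) (R : ℕ → Finset ι) (k : ℕ)
    (a : ι) : ℝ :=
  if k < G then if a ∈ R 0 ∧ (g a : ℕ) = k then x else 0
  else if a ∈ R (k - G) then d (k - G) else 0

variable {x : ℝ} {d : ℕ → ℝ} {g : ι → Fin G} {R : ℕ → Finset ι}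

lemma eliminationItem_of_lt {k : ℕ} (hk : k < G) (a : ι) :
    eliminationItem x d g R k a = if a ∈ R 0 ∧ (g a : ℕ) = k then x else 0 := by
  simp only [eliminationItem, hk, if_true]

lemma eliminationItem_add (l : ℕ) (a : ι) :
    eliminationItem x d g R (G + l) a = if a ∈ R l then d l else 0 := by
  simp [eliminationItem]

lemma eliminationItem_nonneg (hx : 0 ≤ x) (hd : ∀ l, 0 ≤ d l) (k : ℕ) (a : ι) :
    0 ≤ eliminationItem x d g R k a := by
  unfold eliminationItem
  split_ifs <;> first | exact hx | exact hd _ | exact le_rfl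

lemma eliminationItem_congr {R' : ℕ → Finset ι} {l k : ℕ} (hR : ∀ i ≤ l, R i = R' i)
    (hk : k < G + l + 1) : eliminationItem x d g R k = eliminationItem x d g R' k := by
  funext a
  rw [eliminationItem, eliminationItem, hR 0 l.zero_le, hR (k - G) (by omega)]

lemma sum_eliminationItem (L : ℕ) (a : ι) :
    ∑ k ∈ range (G + L), eliminationItem x d g R k a =
      (if a ∈ R 0 then x else 0) + ∑ l ∈ range L, if a ∈ R l then d l else 0 := by
  rw [sum_range_add, sum_congr rfl fun k hk => eliminationItem_of_lt (mem_range.1 hk) a,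
    sum_congr rfl fun l _ => eliminationItem_add l a]
  by_cases ha : a ∈ R 0 <;> simp [ha]

lemma sum_eliminationItem_of_notMem (hR : Antitone R) (L : ℕ) {a : ι} (ha : a ∉ R 0) :
    ∑ k ∈ range (G + L), eliminationItem x d g R k a = 0 := by
  have (l : ℕ) : a ∉ R l := fun h => ha (hR l.zero_le h)
  simp [sum_eliminationItem, this]

lemma sum_eliminationItem_of_mem_sdiff (hR : Antitone R) {t L : ℕ} (ht : t < L) {a : ι}
    (ha : a ∈ R t \ R (t + 1)) :
    ∑ k ∈ range (G + L), eliminationItem x d g R k a = x + ∑ l ∈ range (t + 1), d l := by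
  obtain ⟨hat, hat'⟩ := mem_sdiff.1 ha
  have mem_iff (l : ℕ) : a ∈ R l ↔ l < t + 1 := by
    refine ⟨fun h => ?_, fun h => hR (Nat.le_of_lt_succ h) hat⟩
    by_contra! hl
    exact hat' (hR hl h)
  have filter_eq : {l ∈ range L | l < t + 1} = range (t + 1) := by
    ext l
    simp only [mem_filter, mem_range]
    omega
  rw [sum_eliminationItem, if_pos (hR t.zero_le hat)]
  simp only [mem_iff]
  rw [← sum_filter, filter_eq]

/-- The utilities after round `l` when the elimination stream of `R` is allocated by `A`. -/
noncomputable def roundScore (A : OnlineAlgorithm ι) (x : ℝ) (d : ℕ → ℝ) (g : ι → Fin G)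
    (R : ℕ → Finset ι) (l : ℕ) : ι → ℝ :=
  streamUtility A (eliminationItem x d g R) (G + l + 1)

lemma exists_isGreedyElimination (A : OnlineAlgorithm ι) (x : ℝ) (d : ℕ → ℝ) (g : ι → Fin G)
    (R₀ : Finset ι) :
    ∃ R : ℕ → Finset ι, R 0 = R₀ ∧ IsGreedyElimination g (roundScore A x d g R) R := by
  refine exists_seq_of_causal
    (P := fun l R R' => EliminatesBest g (roundScore A x d g R l) (R l) R')
    (fun l R => exists_eliminatesBest g _ _) (fun l R R' b hR h => ?_) R₀
  have score_eq : roundScore A x d g R l = roundScore A x d g R' l :=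
    streamUtility_congr A fun k hk => eliminationItem_congr hR hk
  rwa [← hR l le_rfl, ← score_eq]

variable [Fintype ι] {A : OnlineAlgorithm ι} {S : ℕ}

lemma sum_roundScore_le (hA : IsFeasible A) (hx : 0 ≤ x) (hd : ∀ l, 0 ≤ d l)
    (h : IsGreedyElimination g (roundScore A x d g R) R)
    (hS : ∀ j, #{a ∈ R 0 | g a = j} = S) {l : ℕ} (hl : l < S) :
    ∑ a ∈ R l, roundScore A x d g R l a ≤
      ((S - l : ℕ) : ℝ) * (G * x / S + ∑ i ∈ range (l + 1), d i / ((S - i : ℕ) : ℝ)) := by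
  have roundItem_le (l : ℕ) (a : ι) : eliminationItem x d g R (G + l) a ≤ d l := by
    rw [eliminationItem_add]
    split_ifs <;> first | exact le_rfl | exact hd l
  have groupItem_le : ∀ k < G, ∀ a ∈ R 0, eliminationItem x d g R k a ≤ x := fun k hk a _ => by
    rw [eliminationItem_of_lt hk]
    split_ifs <;> first | exact le_rfl | exact hx
  refine h.sum_le hS ?_ (fun l => ?_) hl
  · exact (sum_streamUtility_succ_le hA (hd 0) fun a _ => roundItem_le 0 a).trans
      (by gcongr; exact sum_streamUtility_le hA hx groupItem_le)
  · exact sum_streamUtility_succ_le hA (hd (l + 1)) fun a _ => roundItem_le (l + 1) a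

end EliminationStream

/-! ### Mean welfare with negative exponents -/

lemma one_add_mul_sub_le_rpow_of_nonpos {p z : ℝ} (hp : p ≤ 0) (hz : 0 < z) :
    1 + p * (z - 1) ≤ z ^ p := by
  rw [rpow_def_of_pos hz]
  nlinarith [add_one_le_exp (log z * p), log_le_sub_one_of_pos hz]

lemma card_mul_rpow_le_sum_rpow {ι : Type*} {s : Finset ι} {u : ι → ℝ} {p t : ℝ} (hp : p ≤ 0)
    (ht : 0 < t) (hu : ∀ a ∈ s, 0 < u a) (hsum : ∑ a ∈ s, u a ≤ #s * t) :
    #s * t ^ p ≤ ∑ a ∈ s, u a ^ p := by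
  have mean_le : ∑ a ∈ s, u a / t ≤ #s := by rwa [← sum_div, div_le_iff₀ ht]
  calc #s * t ^ p ≤ (∑ a ∈ s, (1 + p * (u a / t - 1))) * t ^ p := by
        gcongr
        simp only [sum_add_distrib, sum_const, nsmul_eq_mul, mul_one, ← mul_sum, sum_sub_distrib]
        nlinarith
    _ ≤ (∑ a ∈ s, (u a / t) ^ p) * t ^ p := by
        gcongr with a ha
        exact one_add_mul_sub_le_rpow_of_nonpos hp (div_pos (hu a ha) ht)
    _ = ∑ a ∈ s, u a ^ p := by
        rw [sum_mul]
        refine sum_congr rfl fun a ha => ?_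
        rw [← mul_rpow (div_pos (hu a ha) ht).le ht.le, div_mul_cancel₀ _ ht.ne']

section Welfare

variable {n : ℕ} {p c : ℝ} {u : Fin n → ℝ}

lemma pMeanWelfare_nonneg (hu : ∀ a, 0 ≤ u a) : 0 ≤ pMeanWelfare n p u := by
  unfold pMeanWelfare
  split_ifs
  · exact le_rfl
  · exact rpow_nonneg (mul_nonneg (by positivity)
      (sum_nonneg fun a _ => rpow_nonneg (hu a) p)) _

lemma OPTwelfare_nonneg {m : ℕ} {v : Fin m → Fin n → ℝ} (hv : ∀ k a, 0 ≤ v k a) :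
    0 ≤ OPTwelfare n m p v := by
  refine Real.sSup_nonneg ?_
  rintro _ ⟨y, hy, -, rfl⟩
  exact pMeanWelfare_nonneg fun a => sum_nonneg fun k _ => mul_nonneg (hv k a) (hy k a)

lemma le_pMeanWelfare (hn : 0 < n) (hp : p < 0) (hc : 0 < c) (hu : ∀ a, 0 < u a)
    (h : ∑ a, u a ^ p ≤ n * c ^ p) : c ≤ pMeanWelfare n p u := by
  have : NeZero n := ⟨hn.ne'⟩
  have sum_pos : 0 < ∑ a, u a ^ p :=
    Finset.sum_pos (fun a _ => rpow_pos_of_pos (hu a) p) univ_nonempty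
  rw [pMeanWelfare, if_neg fun ⟨_, a, ha⟩ => (hu a).ne' ha, one_div p,
    le_rpow_inv_iff_of_neg hc (by positivity) hp, one_div_mul_eq_div,
    div_le_iff₀' (by positivity)]
  exact h

lemma pMeanWelfare_le (hn : 0 < n) (hp : p < 0) (hc : 0 < c) (hu : ∀ a, 0 ≤ u a)
    (h : (∀ a, 0 < u a) → n * c ^ p ≤ ∑ a, u a ^ p) : pMeanWelfare n p u ≤ c := by
  rw [pMeanWelfare]
  split_ifs with hzero
  · exact hc.le
  have u_pos (a : Fin n) : 0 < u a := (hu a).lt_of_ne fun ha => hzero ⟨hp, a, ha.symm⟩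
  have : NeZero n := ⟨hn.ne'⟩
  have sum_pos : 0 < ∑ a, u a ^ p :=
    Finset.sum_pos (fun a _ => rpow_pos_of_pos (u_pos a) p) univ_nonempty
  rw [one_div p, rpow_inv_le_iff_of_neg (by positivity) hc hp, one_div_mul_eq_div,
    le_div_iff₀' (by positivity)]
  exact h u_pos

lemma pMeanWelfare_le_one (hn : 0 < n) (hp : p < 0) (hu : ∀ a, 0 ≤ u a) (hu1 : ∀ a, u a ≤ 1) :
    pMeanWelfare n p u ≤ 1 := by
  refine pMeanWelfare_le hn hp one_pos hu fun u_pos => ?_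
  simpa using card_nsmul_le_sum univ (fun a => u a ^ p) 1 fun a _ =>
    one_le_rpow_of_pos_of_le_one_of_nonpos (u_pos a) (hu1 a) hp.le

lemma pMeanWelfare_le_of_sum_le (hp : p < 0) (hu : ∀ a, 0 ≤ u a) {s : Finset (Fin n)}
    (hs : s.Nonempty) (hc : 0 < c) (hsum : ∑ a ∈ s, u a ≤ #s * c) :
    pMeanWelfare n p u ≤ ((n : ℝ) / #s) ^ (-p⁻¹) * c := by
  have hn : 0 < n := hs.choose.pos
  have : (0 : ℝ) < #s := by exact_mod_cast hs.card_pos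
  refine pMeanWelfare_le hn hp (by positivity) hu fun u_pos => ?_
  calc n * (((n : ℝ) / #s) ^ (-p⁻¹) * c) ^ p = #s * c ^ p := by
        rw [mul_rpow (by positivity) hc.le, ← rpow_mul (by positivity), neg_mul,
          inv_mul_cancel₀ hp.ne, rpow_neg_one]
        field_simp
    _ ≤ ∑ a ∈ s, u a ^ p := card_mul_rpow_le_sum_rpow hp.le hc (fun a _ => u_pos a) hsum
    _ ≤ ∑ a, u a ^ p := sum_le_univ_sum_of_nonneg fun a => rpow_nonneg (hu a) p

lemma pMeanWelfare_le_OPTwelfare {m : ℕ} {v y : Fin m → Fin n → ℝ} (hn : 0 < n) (hp : p < 0)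
    (hv : ∀ k a, 0 ≤ v k a) (hv1 : ∀ a, ∑ k, v k a = 1) (hy : ∀ k a, 0 ≤ y k a)
    (hy1 : ∀ k, ∑ a, y k a ≤ 1) :
    pMeanWelfare n p (fun a => ∑ k, v k a * y k a) ≤ OPTwelfare n m p v := by
  refine le_csSup ⟨1, ?_⟩ ⟨y, hy, hy1, rfl⟩
  rintro w ⟨z, hz, hz1, rfl⟩
  refine pMeanWelfare_le_one hn hp
    (fun a => sum_nonneg fun k _ => mul_nonneg (hv k a) (hz k a)) fun a => ?_
  rw [← hv1 a]
  refine sum_le_sum fun k _ => mul_le_of_le_one_right (hv k a) ?_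
  exact (single_le_sum (fun b _ => hz k b) (mem_univ a)).trans (hz1 k)

lemma onlineUtilities_nonneg {A : OnlineAlgorithm (Fin n)} {m : ℕ} {v : Fin m → Fin n → ℝ}
    (hA : IsFeasible A) (hv : ∀ k a, 0 ≤ v k a) (a : Fin n) : 0 ≤ onlineUtilities n m A v a :=
  sum_nonneg fun k _ => mul_nonneg (hv k a) ((hA k _).1 a)

end Welfare

/-! ### Private items -/

section PrivateItems

variable {n K : ℕ} {w : ℕ → Fin n → ℝ}

/-- The instance consisting of the items `0, …, K - 1` of the stream `w` and of one private item
for each agent, which makes up the difference to a total value of `1`. -/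
noncomputable def withPrivateItems (K : ℕ) (w : ℕ → Fin n → ℝ) : Fin (K + n) → Fin n → ℝ :=
  Fin.append (fun k => w k) fun b => Pi.single b (1 - ∑ k ∈ range K, w k b)

lemma withPrivateItems_castAdd (k : Fin K) : withPrivateItems K w (Fin.castAdd n k) = w k :=
  Fin.append_left _ _ k

lemma withPrivateItems_natAdd (b : Fin n) :
    withPrivateItems K w (Fin.natAdd K b) = Pi.single b (1 - ∑ k ∈ range K, w k b) :=
  Fin.append_right _ _ b

lemma withPrivateItems_nonneg (hw : ∀ k a, 0 ≤ w k a) (hsum : ∀ a, ∑ k ∈ range K, w k a ≤ 1)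
    (k : Fin (K + n)) : 0 ≤ withPrivateItems K w k := by
  refine Fin.addCases (fun k => ?_) (fun b => ?_) k
  · rw [withPrivateItems_castAdd]
    exact hw k
  · rw [withPrivateItems_natAdd, Pi.single_nonneg]
    exact sub_nonneg.2 (hsum b)

lemma sum_withPrivateItems_mul (z : Fin (K + n) → Fin n → ℝ) (a : Fin n) :
    ∑ k, withPrivateItems K w k a * z k a =
      ∑ k : Fin K, w k a * z (Fin.castAdd n k) a +
        (1 - ∑ k ∈ range K, w k a) * z (Fin.natAdd K a) a := by
  simp only [Fin.sum_univ_add, withPrivateItems_castAdd, withPrivateItems_natAdd,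
    Pi.single_apply, ite_mul, zero_mul, sum_ite_eq, mem_univ, if_true]

lemma sum_withPrivateItems (a : Fin n) : ∑ k, withPrivateItems K w k a = 1 := by
  simpa [sum_range] using sum_withPrivateItems_mul (K := K) (w := w) 1 a

lemma onlineUtilities_withPrivateItems (A : OnlineAlgorithm (Fin n)) {a : Fin n}
    (ha : ∑ k ∈ range K, w k a = 1) :
    onlineUtilities n (K + n) A (withPrivateItems K w) a = streamUtility A w K a := by
  have history_eq (k : Fin K) :
      (fun i : Fin (k + 1) => withPrivateItems K w (Fin.castLE (Fin.castAdd n k).isLt i)) =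
        fun i : Fin (k + 1) => w i :=
    funext fun i => withPrivateItems_castAdd ⟨i, by omega⟩
  rw [onlineUtilities, sum_withPrivateItems_mul fun k =>
    A k fun i => withPrivateItems K w (Fin.castLE k.isLt i), ha, sub_self, zero_mul, add_zero]
  calc ∑ k : Fin K, w k a * A k
          (fun i => withPrivateItems K w (Fin.castLE (Fin.castAdd n k).isLt i)) a
      = ∑ k : Fin K, w k a * A k (fun i => w i) a := by simp only [history_eq]
    _ = streamUtility A w K a :=
      Fin.sum_univ_eq_sum_range (fun k => w k a * A k (fun i => w i) a) K

lemma pMeanWelfare_le_OPTwelfare_withPrivateItems {p : ℝ} {y : ℕ → Fin n → ℝ} (hn : 0 < n)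
    (hp : p < 0) (hw : ∀ k a, 0 ≤ w k a) (hsum : ∀ a, ∑ k ∈ range K, w k a ≤ 1)
    (hy : ∀ k a, 0 ≤ y k a) (hy1 : ∀ k, ∑ a, y k a ≤ 1) :
    pMeanWelfare n p (fun a => ∑ k ∈ range K, w k a * y k a + (1 - ∑ k ∈ range K, w k a)) ≤
      OPTwelfare n (K + n) p (withPrivateItems K w) := by
  set z : Fin (K + n) → Fin n → ℝ := Fin.append (fun k => y k) fun b => Pi.single b 1 with hz
  have z_nonneg (k : Fin (K + n)) : 0 ≤ z k := by
    refine Fin.addCases (fun k => ?_) (fun b => ?_) k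
    · rw [hz, Fin.append_left]
      exact hy k
    · rw [hz, Fin.append_right]
      exact Pi.single_nonneg.2 zero_le_one
  have sum_z_le : ∀ k, ∑ a, z k a ≤ 1 := by
    refine Fin.addCases (fun k => ?_) fun b => ?_
    · simpa [hz] using hy1 k
    · simp [hz]
  simpa only [sum_withPrivateItems_mul, hz, Fin.append_left, Fin.append_right, Pi.single_eq_same,
    mul_one, sum_range] using
    pMeanWelfare_le_OPTwelfare hn hp (withPrivateItems_nonneg hw hsum) sum_withPrivateItems
      z_nonneg sum_z_le

end PrivateItems

/-! ### Budgets -/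

section Budget

variable {S l : ℕ} {α : ℝ}

/-- The share `((S - l) / S) ^ α` of an agent's value outside the group items that is still to be
revealed after `l` of `S` rounds. -/
noncomputable def budget (S : ℕ) (α : ℝ) (l : ℕ) : ℝ :=
  (((S - l : ℕ) : ℝ) / S) ^ α

lemma budget_nonneg : 0 ≤ budget S α l := by
  unfold budget
  positivity

lemma budget_pos (hl : l < S) : 0 < budget S α l := by
  have : 0 < S - l := Nat.sub_pos_of_lt hl
  have : 0 < S := by omega
  unfold budget
  positivity

lemma budget_zero (hS : 0 < S) : budget S α 0 = 1 := by
  have : (S : ℝ) ≠ 0 := by exact_mod_cast hS.ne'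
  rw [budget, Nat.sub_zero, div_self this, one_rpow]

lemma budget_self (hα : α ≠ 0) : budget S α S = 0 := by
  rw [budget, Nat.sub_self, Nat.cast_zero, zero_div, zero_rpow hα]

lemma budget_antitone (hα : 0 ≤ α) : Antitone (budget S α) := fun l l' hl => by
  unfold budget
  gcongr

lemma budget_le_one (hα : 0 ≤ α) (hS : 0 < S) : budget S α l ≤ 1 :=
  (budget_antitone hα l.zero_le).trans_eq (budget_zero hS)

lemma budget_sub_budget_succ_le (hα : 0 ≤ α) (hα1 : α ≤ 1) (hl : l < S) :
    budget S α l - budget S α (l + 1) ≤ budget S α (S - 1) := by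
  obtain ⟨c, rfl⟩ := Nat.exists_eq_add_of_lt hl
  rw [sub_le_iff_le_add', budget, budget, budget,
    show l + c + 1 - l = c + 1 by omega, show l + c + 1 - (l + 1) = c by omega,
    show l + c + 1 - (l + c + 1 - 1) = 1 by omega, Nat.cast_add c 1, add_div]
  exact rpow_add_le_add_rpow (by positivity) (by positivity) hα hα1

lemma budget_le_two_mul_budget_succ (hα : 0 ≤ α) (hα1 : α ≤ 1) (hl : l + 1 < S) :
    budget S α l ≤ 2 * budget S α (l + 1) := by
  have hlast : budget S α (S - 1) ≤ budget S α (l + 1) := budget_antitone hα (by omega)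
  linarith [budget_sub_budget_succ_le hα hα1 (l.lt_succ_self.trans hl)]

lemma budget_rpow {p : ℝ} (hp : p ≠ 0) : budget S (-p⁻¹) l ^ p = S / ((S - l : ℕ) : ℝ) := by
  rw [budget, ← rpow_mul (by positivity), neg_mul, inv_mul_cancel₀ hp, rpow_neg_one, inv_div]

/-- The value of a group item to its group: half the budget of the last round. -/
noncomputable def groupItemValue (S : ℕ) (α : ℝ) : ℝ := budget S α (S - 1) / 2

/-- The value of the item of round `l` to the survivors: the decrease of the budget, scaled so that
a group item and the items of all rounds have total value `1`. -/
noncomputable def roundItemValue (S : ℕ) (α : ℝ) (l : ℕ) : ℝ :=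
  (1 - groupItemValue S α) * (budget S α l - budget S α (l + 1))

lemma groupItemValue_nonneg : 0 ≤ groupItemValue S α :=
  div_nonneg budget_nonneg zero_le_two

lemma groupItemValue_le_half (hα : 0 ≤ α) (hS : 0 < S) : groupItemValue S α ≤ 1 / 2 := by
  unfold groupItemValue
  gcongr
  exact budget_le_one hα hS

lemma roundItemValue_nonneg (hα : 0 ≤ α) (hS : 0 < S) : 0 ≤ roundItemValue S α l :=
  mul_nonneg (by linarith [groupItemValue_le_half hα hS])
    (sub_nonneg.2 (budget_antitone hα l.le_succ))

lemma roundItemValue_le (hα : 0 ≤ α) (hα1 : α ≤ 1) (hl : l < S) :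
    roundItemValue S α l ≤ budget S α (S - 1) :=
  (mul_le_of_le_one_left (sub_nonneg.2 (budget_antitone hα l.le_succ))
    (sub_le_self 1 groupItemValue_nonneg)).trans (budget_sub_budget_succ_le hα hα1 hl)

lemma sum_roundItemValue (hS : 0 < S) (t : ℕ) :
    ∑ l ∈ range t, roundItemValue S α l = (1 - groupItemValue S α) * (1 - budget S α t) := by
  simp only [roundItemValue]
  rw [← mul_sum, sum_range_sub', budget_zero hS]

lemma sum_range_inv_sub (S : ℕ) : ∑ l ∈ range S, ((S - l : ℕ) : ℝ)⁻¹ = harmonic S := by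
  rw [← sum_range_reflect, harmonic]
  push_cast
  refine sum_congr rfl fun l hl => ?_
  rw [show S - (S - 1 - l) = l + 1 by have := mem_range.1 hl; omega, Nat.cast_succ]

lemma one_le_harmonic (hS : 0 < S) : (1 : ℝ) ≤ harmonic S := by
  rw [← sum_range_inv_sub]
  calc (1 : ℝ) = ((S - (S - 1) : ℕ) : ℝ)⁻¹ := by
        rw [show S - (S - 1) = 1 by omega, Nat.cast_one, inv_one]
    _ ≤ ∑ l ∈ range S, ((S - l : ℕ) : ℝ)⁻¹ :=
        single_le_sum (f := fun l => ((S - l : ℕ) : ℝ)⁻¹) (fun l _ => by positivity)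
          (mem_range.2 (by omega))

lemma rpow_mul_budget_last_le {n : ℕ} (hS : 0 < S) (hn : n ≤ 4 * (S * S)) (hα : 0 ≤ α)
    (hα1 : α ≤ 1) : ((n : ℝ) / S) ^ α * budget S α (S - 1) ≤ 4 := by
  have hn' : (n : ℝ) ≤ 4 * (S * S) := by exact_mod_cast hn
  rw [budget, Nat.sub_sub_self hS, Nat.cast_one, ← mul_rpow (by positivity) (by positivity)]
  calc ((n : ℝ) / S * (1 / S)) ^ α ≤ 4 ^ α := by
        gcongr
        rw [div_mul_div_comm, mul_one]
        exact div_le_of_le_mul₀ (by positivity) zero_le_four hn'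
    _ ≤ 4 := rpow_le_self_of_one_le (by norm_num) hα1

lemma neg_inv_mem_Ioc_of_le_neg_one {p : ℝ} (hp : p ≤ -1) : -p⁻¹ ∈ Set.Ioc (0 : ℝ) 1 := by
  rw [← inv_neg]
  exact ⟨inv_pos.2 (by linarith), inv_le_one_of_one_le₀ (by linarith)⟩

lemma rpow_neg_mul_le_one_div_mul_rpow {p b H : ℝ} (hb : 0 ≤ b) (hp : p ≤ -1) (hH : 1 ≤ H) :
    b ^ (-p) * H ≤ (1 / (b * H)) ^ p := by
  have hH0 : 0 ≤ H := zero_le_one.trans hH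
  rw [one_div, inv_rpow (by positivity), ← rpow_neg (by positivity), mul_rpow hb hH0]
  gcongr
  exact self_le_rpow_of_one_le hH (by linarith)

end Budget

/-! ### The hard instance -/

section HardInstance

variable {ι : Type*} [DecidableEq ι] {S : ℕ} {α : ℝ} {g : ι → Fin S} {R : ℕ → Finset ι}

/-- The elimination stream with `S` groups, `S` rounds and the values prescribed by the budgets. -/
noncomputable def hardItem (S : ℕ) (α : ℝ) (g : ι → Fin S) (R : ℕ → Finset ι) : ℕ → ι → ℝ :=
  eliminationItem (groupItemValue S α) (roundItemValue S α) g R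

lemma hardItem_nonneg (hα : 0 ≤ α) (hS : 0 < S) (k : ℕ) (a : ι) : 0 ≤ hardItem S α g R k a :=
  eliminationItem_nonneg groupItemValue_nonneg (fun _ => roundItemValue_nonneg hα hS) k a

lemma one_sub_sum_hardItem_of_mem_sdiff (hR : Antitone R) {t : ℕ} (ht : t < S) {a : ι}
    (ha : a ∈ R t \ R (t + 1)) :
    1 - ∑ k ∈ range (S + S), hardItem S α g R k a =
      (1 - groupItemValue S α) * budget S α (t + 1) := by
  rw [hardItem, sum_eliminationItem_of_mem_sdiff hR ht ha,
    sum_roundItemValue (Nat.zero_lt_of_lt ht)]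
  ring

lemma sum_hardItem_le_one (hα : 0 ≤ α) (hS : 0 < S) (hR : Antitone R) (hempty : R S = ∅) (a : ι) :
    ∑ k ∈ range (S + S), hardItem S α g R k a ≤ 1 := by
  by_cases ha : a ∈ R 0
  · obtain ⟨t, ht, hat⟩ := exists_mem_sdiff_succ hempty ha
    rw [← sub_nonneg, one_sub_sum_hardItem_of_mem_sdiff hR ht hat]
    exact mul_nonneg (by linarith [groupItemValue_le_half hα hS]) budget_nonneg
  · exact (sum_eliminationItem_of_notMem hR S ha).trans_le zero_le_one

lemma sum_hardItem_of_mem_last (hα : α ≠ 0) (hS : 0 < S) (hR : Antitone R) (hempty : R S = ∅)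
    {a : ι} (ha : a ∈ R (S - 1)) : ∑ k ∈ range (S + S), hardItem S α g R k a = 1 := by
  have hsucc : S - 1 + 1 = S := Nat.sub_add_cancel hS
  have mem_sdiff : a ∈ R (S - 1) \ R (S - 1 + 1) := by rwa [hsucc, hempty, sdiff_empty]
  have hresidual :=
    one_sub_sum_hardItem_of_mem_sdiff (α := α) (g := g) hR (by omega) mem_sdiff
  rw [hsucc, budget_self hα, mul_zero] at hresidual
  linarith

/-- The hindsight allocation of the stream: each member of `L` takes its group item, and nobody
takes anything else. -/
def groupItemClaim (g : ι → Fin S) (L : Finset ι) (k : ℕ) (a : ι) : ℝ :=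
  if a ∈ L ∧ (g a : ℕ) = k then 1 else 0

lemma groupItemClaim_nonneg (L : Finset ι) (k : ℕ) (a : ι) : 0 ≤ groupItemClaim g L k a := by
  unfold groupItemClaim
  split_ifs <;> norm_num

lemma sum_groupItemClaim_le_one [Fintype ι] {L : Finset ι}
    (hL : ∀ j, #{a ∈ L | g a = j} ≤ 1) (k : ℕ) : ∑ a, groupItemClaim g L k a ≤ 1 := by
  have sum_eq : ∑ a, groupItemClaim g L k a = #{a ∈ L | (g a : ℕ) = k} := by
    simp [groupItemClaim, ← filter_filter]
  rw [sum_eq]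
  norm_cast
  by_cases hk : k < S
  · simpa only [Fin.ext_iff] using hL ⟨k, hk⟩
  · rw [filter_false_of_mem fun a _ => by omega, card_empty]
    exact zero_le_one

lemma sum_hardItem_mul_groupItemClaim {L : Finset ι} (hL : L ⊆ R 0) {a : ι} (ha : a ∈ L) :
    ∑ k ∈ range (S + S), hardItem S α g R k a * groupItemClaim g L k a = groupItemValue S α := by
  have hg : (g a : ℕ) ∈ range (S + S) := mem_range.2 (by omega)
  simp only [groupItemClaim, ha, true_and, mul_ite, mul_one, mul_zero]
  rw [sum_ite_eq, if_pos hg, hardItem, eliminationItem_of_lt (g a).isLt, if_pos ⟨hL ha, rfl⟩]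

/-- The utility of `a` if the last survivors take their group items and everyone else takes a
private item worth the rest of the agent's unit value. -/
noncomputable def hindsightUtility (S : ℕ) (α : ℝ) (g : ι → Fin S) (R : ℕ → Finset ι) (a : ι) :
    ℝ :=
  ∑ k ∈ range (S + S), hardItem S α g R k a * groupItemClaim g (R (S - 1)) k a +
    (1 - ∑ k ∈ range (S + S), hardItem S α g R k a)

lemma hindsightUtility_of_notMem (hR : Antitone R) {a : ι} (ha : a ∉ R 0) :
    hindsightUtility S α g R a = 1 := by
  have ha' : a ∉ R (S - 1) := fun h => ha (hR (S - 1).zero_le h)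
  simp [hindsightUtility, groupItemClaim, ha', hardItem, sum_eliminationItem_of_notMem hR S ha]

lemma budget_div_four_le_hindsightUtility (hα : 0 ≤ α) (hα1 : α ≤ 1) (hR : Antitone R) {t : ℕ}
    (ht : t < S) {a : ι} (ha : a ∈ R t \ R (t + 1)) :
    budget S α t / 4 ≤ hindsightUtility S α g R a := by
  have hS : 0 < S := Nat.zero_lt_of_lt ht
  have value_le := groupItemValue_le_half hα hS
  have residual_ge : 1 / 2 * budget S α (t + 1) ≤
      (1 - groupItemValue S α) * budget S α (t + 1) :=
    mul_le_mul_of_nonneg_right (by linarith) budget_nonneg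
  have next_nonneg : 0 ≤ budget S α (t + 1) := budget_nonneg
  rw [hindsightUtility, one_sub_sum_hardItem_of_mem_sdiff hR ht ha]
  obtain rfl | hlt : t = S - 1 ∨ t + 1 < S := by omega
  · rw [sum_hardItem_mul_groupItemClaim (hR (S - 1).zero_le) (sdiff_subset ha)]
    have value_eq : groupItemValue S α = budget S α (S - 1) / 2 := rfl
    linarith [groupItemValue_nonneg (S := S) (α := α)]
  · have claim_nonneg :
        0 ≤ ∑ k ∈ range (S + S), hardItem S α g R k a * groupItemClaim g (R (S - 1)) k a :=
      sum_nonneg fun k _ => mul_nonneg (hardItem_nonneg hα hS k a) (groupItemClaim_nonneg _ k a)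
    linarith [budget_le_two_mul_budget_succ hα hα1 hlt]

lemma hindsightUtility_pos (hα : 0 ≤ α) (hα1 : α ≤ 1) (hR : Antitone R) (hempty : R S = ∅)
    (a : ι) : 0 < hindsightUtility S α g R a := by
  by_cases ha : a ∈ R 0
  · obtain ⟨t, ht, hat⟩ := exists_mem_sdiff_succ hempty ha
    exact (div_pos (budget_pos ht) zero_lt_four).trans_le
      (budget_div_four_le_hindsightUtility hα hα1 hR ht hat)
  · exact (hindsightUtility_of_notMem hR ha).symm ▸ one_pos

lemma sum_hindsightUtility_rpow_le {p : ℝ} (hp : p ≤ -1) (hR : Antitone R) (hempty : R S = ∅)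
    (hcard : ∀ t < S, #(R t \ R (t + 1)) = S) :
    ∑ a ∈ R 0, hindsightUtility S (-p⁻¹) g R a ^ p ≤ S * S * ((4 : ℝ) ^ (-p) * harmonic S) := by
  obtain ⟨hα, hα1⟩ := neg_inv_mem_Ioc_of_le_neg_one hp
  have round_le (t : ℕ) (ht : t < S) :
      ∑ a ∈ R t \ R (t + 1), hindsightUtility S (-p⁻¹) g R a ^ p ≤
        S * S * (4 : ℝ) ^ (-p) * ((S - t : ℕ) : ℝ)⁻¹ := by
    calc ∑ a ∈ R t \ R (t + 1), hindsightUtility S (-p⁻¹) g R a ^ p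
        ≤ #(R t \ R (t + 1)) • (budget S (-p⁻¹) t / 4) ^ p :=
          sum_le_card_nsmul _ _ _ fun a ha =>
            rpow_le_rpow_of_nonpos (div_pos (budget_pos ht) zero_lt_four)
              (budget_div_four_le_hindsightUtility hα.le hα1 hR ht ha) (by linarith)
      _ = S * S * (4 : ℝ) ^ (-p) * ((S - t : ℕ) : ℝ)⁻¹ := by
          rw [hcard t ht, div_rpow budget_nonneg zero_le_four, budget_rpow (by linarith),
            rpow_neg zero_le_four, nsmul_eq_mul]
          ring
  rw [sum_eq_sum_range_sum_sdiff hR hempty]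
  refine (sum_le_sum fun t ht => round_le t (mem_range.1 ht)).trans_eq ?_
  rw [← mul_sum, sum_range_inv_sub, mul_assoc]

variable [Fintype ι]

lemma sum_univ_hindsightUtility_rpow_le {f : ℕ → ι → ℝ} {p : ℝ} (hS : 0 < S)
    (hn : S * S ≤ Fintype.card ι) (hp : p ≤ -1) (h : IsGreedyElimination g f R)
    (hgroup : ∀ j, #{a ∈ R 0 | g a = j} = S) :
    ∑ a, hindsightUtility S (-p⁻¹) g R a ^ p ≤
      Fintype.card ι * (1 / (4 * (harmonic S : ℝ))) ^ p := by
  have hH := one_le_harmonic hS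
  have mean_le : 4 ^ (-p) * (harmonic S : ℝ) ≤ (1 / (4 * (harmonic S : ℝ))) ^ p :=
    rpow_neg_mul_le_one_div_mul_rpow zero_le_four hp hH
  have one_le : 1 ≤ 4 ^ (-p) * (harmonic S : ℝ) :=
    one_le_mul_of_one_le_of_one_le (one_le_rpow (by norm_num) (by linarith)) hH
  have players_le := sum_hindsightUtility_rpow_le (g := g) hp h.antitone (h.eq_empty hgroup)
    fun t ht => by simpa using h.card_sdiff_succ hgroup ht
  have outsiders_eq : ∑ a ∈ (R 0)ᶜ, hindsightUtility S (-p⁻¹) g R a ^ p =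
      Fintype.card ι - S * S := by
    rw [sum_congr rfl fun a ha => by
      rw [hindsightUtility_of_notMem h.antitone (mem_compl.1 ha), one_rpow]]
    simp [card_compl, h.card_eq hgroup, Nat.cast_sub hn]
  have hn' : (S : ℝ) * S ≤ Fintype.card ι := by exact_mod_cast hn
  rw [← sum_add_sum_compl (R 0), outsiders_eq]
  nlinarith

lemma sum_last_streamUtility_le {A : OnlineAlgorithm ι} (hA : IsFeasible A) (hα : 0 ≤ α)
    (hα1 : α ≤ 1) (hS : 0 < S)
    (h : IsGreedyElimination g (roundScore A (groupItemValue S α) (roundItemValue S α) g R) R)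
    (hgroup : ∀ j, #{a ∈ R 0 | g a = j} = S) :
    ∑ a ∈ R (S - 1), streamUtility A (hardItem S α g R) (S + S) a ≤
      3 / 2 * harmonic S * budget S α (S - 1) := by
  have sum_le := sum_roundScore_le hA groupItemValue_nonneg
    (fun _ => roundItemValue_nonneg hα hS) h hgroup (l := S - 1) (by omega)
  rw [roundScore, add_assoc, Nat.sub_add_cancel hS, Nat.sub_sub_self hS, Nat.cast_one, one_mul,
    mul_div_cancel_left₀ _ (by positivity)] at sum_le
  have rounds_le : ∑ i ∈ range S, roundItemValue S α i / ((S - i : ℕ) : ℝ) ≤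
      budget S α (S - 1) * harmonic S := by
    rw [← sum_range_inv_sub, mul_sum]
    refine sum_le_sum fun i hi => ?_
    rw [div_eq_mul_inv]
    gcongr
    exact roundItemValue_le hα hα1 (mem_range.1 hi)
  have value_le : groupItemValue S α ≤ 1 / 2 * harmonic S * budget S α (S - 1) := by
    rw [groupItemValue]
    nlinarith [one_le_harmonic hS, budget_nonneg (S := S) (α := α) (l := S - 1)]
  rw [hardItem]
  linarith

end HardInstance

section HardInstanceWelfare

variable {n S : ℕ} {p : ℝ} {g : Fin n → Fin S} {f : ℕ → Fin n → ℝ} {R : ℕ → Finset (Fin n)}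

/-- The adversary's instance: the stream followed by private items that top up every agent's
total value to `1`. -/
noncomputable def hardInstance (S : ℕ) (α : ℝ) (g : Fin n → Fin S) (R : ℕ → Finset (Fin n)) :
    Fin (S + S + n) → Fin n → ℝ :=
  withPrivateItems (S + S) (hardItem S α g R)

lemma hardInstance_nonneg {α : ℝ} (hα : 0 ≤ α) (hS : 0 < S) (hR : Antitone R) (hempty : R S = ∅)
    (k : Fin (S + S + n)) (a : Fin n) : 0 ≤ hardInstance S α g R k a :=
  withPrivateItems_nonneg (hardItem_nonneg hα hS) (sum_hardItem_le_one hα hS hR hempty) k a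

lemma one_div_harmonic_le_OPTwelfare_hardInstance (hS : 0 < S) (hn : S * S ≤ n) (hp : p ≤ -1)
    (h : IsGreedyElimination g f R) (hgroup : ∀ j, #{a ∈ R 0 | g a = j} = S) :
    1 / (4 * (harmonic S : ℝ)) ≤ OPTwelfare n (S + S + n) p (hardInstance S (-p⁻¹) g R) := by
  obtain ⟨hα, hα1⟩ := neg_inv_mem_Ioc_of_le_neg_one hp
  have hempty := h.eq_empty hgroup
  have hH := one_le_harmonic hS
  have hn0 : 0 < n := (Nat.mul_pos hS hS).trans_le hn
  have hp0 : p < 0 := by linarith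
  have sum_le : ∑ a, hindsightUtility S (-p⁻¹) g R a ^ p ≤
      n * (1 / (4 * (harmonic S : ℝ))) ^ p := by
    simpa only [Fintype.card_fin] using
      sum_univ_hindsightUtility_rpow_le hS (hn.trans_eq (Fintype.card_fin n).symm) hp h hgroup
  have last_group_le (j : Fin S) : #{a ∈ R (S - 1) | g a = j} ≤ 1 := by
    rw [h.card_group hgroup]
    omega
  calc 1 / (4 * (harmonic S : ℝ)) ≤ pMeanWelfare n p (hindsightUtility S (-p⁻¹) g R) :=
        le_pMeanWelfare hn0 hp0 (by positivity)
          (hindsightUtility_pos hα.le hα1 h.antitone hempty) sum_le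
    _ ≤ OPTwelfare n (S + S + n) p (hardInstance S (-p⁻¹) g R) :=
        pMeanWelfare_le_OPTwelfare_withPrivateItems hn0 hp0 (hardItem_nonneg hα.le hS)
          (sum_hardItem_le_one hα.le hS h.antitone hempty) (groupItemClaim_nonneg _)
          (sum_groupItemClaim_le_one last_group_le)

lemma onlineUtilities_hardInstance_of_mem_last (A : OnlineAlgorithm (Fin n)) {α : ℝ} (hα : α ≠ 0)
    (hS : 0 < S) (hR : Antitone R) (hempty : R S = ∅) {a : Fin n} (ha : a ∈ R (S - 1)) :
    onlineUtilities n (S + S + n) A (hardInstance S α g R) a =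
      streamUtility A (hardItem S α g R) (S + S) a :=
  onlineUtilities_withPrivateItems A (sum_hardItem_of_mem_last hα hS hR hempty ha)

lemma ALGwelfare_hardInstance_le {A : OnlineAlgorithm (Fin n)} (hS : 0 < S)
    (hn : n ≤ 4 * (S * S)) (hp : p ≤ -1) (hA : IsFeasible A)
    (h : IsGreedyElimination g
      (roundScore A (groupItemValue S (-p⁻¹)) (roundItemValue S (-p⁻¹)) g R) R)
    (hgroup : ∀ j, #{a ∈ R 0 | g a = j} = S) :
    ALGwelfare n (S + S + n) p A (hardInstance S (-p⁻¹) g R) ≤ 6 * harmonic S / S := by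
  obtain ⟨hα, hα1⟩ := neg_inv_mem_Ioc_of_le_neg_one hp
  have hempty := h.eq_empty hgroup
  have hH := one_le_harmonic hS
  have card_last : #(R (S - 1)) = S := by
    simp [h.card_eq hgroup, Nat.sub_sub_self (Nat.one_le_of_lt hS)]
  set q := budget S (-p⁻¹) (S - 1)
  have q_pos : 0 < q := budget_pos (by omega)
  have sum_last_le : ∑ a ∈ R (S - 1), onlineUtilities n (S + S + n) A
      (hardInstance S (-p⁻¹) g R) a ≤
        #(R (S - 1)) * (3 / 2 * harmonic S * q / S) := by
    rw [card_last, mul_div_cancel₀ _ (by positivity), sum_congr rfl fun a ha =>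
      onlineUtilities_hardInstance_of_mem_last A hα.ne' hS h.antitone hempty ha]
    exact sum_last_streamUtility_le hA hα.le hα1 hS h hgroup
  have utility_nonneg :=
    onlineUtilities_nonneg hA (hardInstance_nonneg (g := g) hα.le hS h.antitone hempty)
  have last_nonempty : (R (S - 1)).Nonempty := card_pos.1 (hS.trans_eq card_last.symm)
  calc ALGwelfare n (S + S + n) p A (hardInstance S (-p⁻¹) g R)
      ≤ ((n : ℝ) / S) ^ (-p⁻¹) * (3 / 2 * harmonic S * q / S) := by
        simpa only [card_last, ALGwelfare] using pMeanWelfare_le_of_sum_le (by linarith)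
          utility_nonneg last_nonempty (by positivity) sum_last_le
    _ = ((n : ℝ) / S) ^ (-p⁻¹) * q * (3 / 2 * harmonic S / S) := by ring
    _ ≤ 4 * (3 / 2 * harmonic S / S) := by
        gcongr
        exact rpow_mul_budget_last_le hS hn hα.le hα1
    _ = 6 * harmonic S / S := by ring

end HardInstanceWelfare

lemma exists_instance_of_sq_le {n S : ℕ} (hS : 0 < S) (hSn : S * S ≤ n) (hn : n ≤ 4 * (S * S))
    {p : ℝ} (hp : p ≤ -1) {A : OnlineAlgorithm (Fin n)} (hA : IsFeasible A) :
    ∃ m : ℕ, ∃ v : Fin m → Fin n → ℝ, (∀ k a, 0 ≤ v k a) ∧ (∀ a, ∑ k, v k a = 1) ∧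
      1 / (4 * (harmonic S : ℝ)) ≤ OPTwelfare n m p v ∧
      ALGwelfare n m p A v ≤ 6 * harmonic S / S := by
  obtain ⟨hα, -⟩ := neg_inv_mem_Ioc_of_le_neg_one hp
  have : NeZero S := ⟨hS.ne'⟩
  obtain ⟨g, R₀, hgroup⟩ := exists_groups (ι := Fin n) (κ := Fin S) (S := S) (by simpa using hSn)
  obtain ⟨R, rfl, h⟩ := exists_isGreedyElimination A (groupItemValue S (-p⁻¹))
    (roundItemValue S (-p⁻¹)) g R₀
  exact ⟨S + S + n, hardInstance S (-p⁻¹) g R,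
    hardInstance_nonneg hα.le hS h.antitone (h.eq_empty hgroup),
    sum_withPrivateItems, one_div_harmonic_le_OPTwelfare_hardInstance hS hSn hp h hgroup,
    ALGwelfare_hardInstance_le hS hn hp hA h hgroup⟩

/-! ### Asymptotics -/

lemma exists_instance_sqrt_mul_ALGwelfare_le {n : ℕ} (hn : 0 < n) {p : ℝ} (hp : p ≤ -1)
    {A : OnlineAlgorithm (Fin n)} (hA : IsFeasible A) :
    ∃ m : ℕ, ∃ v : Fin m → Fin n → ℝ, (∀ k a, 0 ≤ v k a) ∧ (∀ a, ∑ k, v k a = 1) ∧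
      √n * ALGwelfare n m p A v ≤ 48 * (1 + log n) ^ 2 * OPTwelfare n m p v := by
  have hS : 0 < Nat.sqrt n := Nat.sqrt_pos.2 hn
  have hSn : Nat.sqrt n * Nat.sqrt n ≤ n := Nat.sqrt_le n
  have hn4 : n ≤ 4 * (Nat.sqrt n * Nat.sqrt n) := by nlinarith [Nat.sqrt_le_add n]
  obtain ⟨m, v, hv, hv1, hopt, halg⟩ := exists_instance_of_sq_le hS hSn hn4 hp hA
  refine ⟨m, v, hv, hv1, ?_⟩
  set S := Nat.sqrt n
  have hH : (1 : ℝ) ≤ harmonic S := one_le_harmonic hS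
  have harmonic_le : (harmonic S : ℝ) ≤ 1 + log n :=
    (harmonic_le_one_add_log S).trans (by gcongr; exact Nat.sqrt_le_self n)
  have sqrt_le : √n ≤ 2 * S := by
    rw [sqrt_le_left (by positivity), mul_pow]
    norm_num [sq]
    exact_mod_cast hn4
  have : 0 ≤ log n := log_natCast_nonneg n
  calc √n * ALGwelfare n m p A v ≤ √n * (6 * harmonic S / S) := by gcongr
    _ ≤ 2 * S * (6 * harmonic S / S) := by gcongr
    _ = 48 * (harmonic S : ℝ) ^ 2 * (1 / (4 * harmonic S)) := by field_simp; norm_num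
    _ ≤ 48 * (1 + log n) ^ 2 * OPTwelfare n m p v := by gcongr

lemma eventually_mul_one_add_log_sq_le_rpow (C : ℝ) {ε : ℝ} (hε : 0 < ε) :
    ∀ᶠ n : ℕ in Filter.atTop, C * (1 + log n) ^ 2 ≤ (n : ℝ) ^ ε := by
  have const_isLittleO : (fun _ : ℝ => (1 : ℝ)) =o[Filter.atTop] fun x : ℝ => x ^ (ε / 2) :=
    (Asymptotics.isLittleO_one_left_iff ℝ).2 <|
      tendsto_norm_atTop_atTop.comp (tendsto_rpow_atTop (half_pos hε))
  have sq_isLittleO := ((const_isLittleO.add (isLittleO_log_rpow_atTop (half_pos hε))).pow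
    two_pos).const_mul_left C
  filter_upwards [tendsto_natCast_atTop_atTop.eventually (sq_isLittleO.bound one_pos)] with n hn
  calc C * (1 + log n) ^ 2 ≤ 1 * ‖((n : ℝ) ^ (ε / 2)) ^ 2‖ := (le_norm_self _).trans hn
    _ = (n : ℝ) ^ ε := by
      rw [one_mul, norm_pow, norm_of_nonneg (by positivity), ← rpow_mul_natCast (by positivity)]
      norm_num

theorem stmt_18 :
    ∀ ε : ℝ, 0 < ε →
    ∃ n₀ : ℕ, ∀ n : ℕ, n₀ ≤ n →
    ∀ p : ℝ, p ≤ -1 →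
    ∀ A : (k : ℕ) → (Fin (k + 1) → Fin n → ℝ) → (Fin n → ℝ),
      (∀ k h, (∀ a, 0 ≤ A k h a) ∧ ∑ a, A k h a ≤ 1) →
      ∃ m : ℕ, ∃ v : Fin m → Fin n → ℝ,
        (∀ k a, 0 ≤ v k a) ∧ (∀ a, ∑ k, v k a = 1) ∧
        OPTwelfare n m p v ≥
          (n : ℝ) ^ ((1 / 2 : ℝ) - ε) * ALGwelfare n m p A v := by
  intro ε hε
  obtain ⟨n₀, hn₀⟩ := Filter.eventually_atTop.1 <|
    (Filter.eventually_gt_atTop 0).and (eventually_mul_one_add_log_sq_le_rpow 48 hε)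
  refine ⟨n₀, fun n hn p hp A hA => ?_⟩
  obtain ⟨n_pos, log_sq_le⟩ := hn₀ n hn
  obtain ⟨m, v, hv, hv1, hratio⟩ := exists_instance_sqrt_mul_ALGwelfare_le n_pos hp hA
  have opt_nonneg : 0 ≤ OPTwelfare n m p v := OPTwelfare_nonneg hv
  refine ⟨m, v, hv, hv1, ?_⟩
  rw [rpow_sub (by positivity), ← sqrt_eq_rpow, ge_iff_le, div_mul_eq_mul_div,
    div_le_iff₀' (by positivity)]
  exact hratio.trans (by gcongr)
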